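/- arXiv:2604.18410 — 2 statements merged into one kernel-verified Lean document; each statement's English description precedes it below -/
import Mathlib

section
/- Every free action of a countably infinite discrete abelian group G on the circle 𝕋 is uniquely ergodic: there is exactly one G-invariant regular Borel probability measure on 𝕋. -/
open MeasureTheory Topology Filter Set Function

noncomputable section

/-- The circle `ℝ/ℤ`. -/
abbrev T1 := UnitAddCircle

/-- `F : ℝ → ℝ` is an (increasing, continuous) lift of the circle map `f`. -/
def IsLiftOf (F : ℝ → ℝ) (f : T1 → T1) : Prop :=
  Continuous F ∧ StrictMono F ∧ (∀ x : ℝ, F (x + 1) = F x + 1) ∧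
    ∀ x : ℝ, ((F x : T1)) = f ((x : T1))

/-- A circle map is orientation preserving if it admits an increasing lift. -/
def OrientationPreservingMap (f : T1 → T1) : Prop := ∃ F : ℝ → ℝ, IsLiftOf F f

/-- `ρ` is the rotation number of `f`:  `Fⁿ(x)/n → ρ  (mod ℤ)` for a lift `F`. -/
def HasRotationNumber (f : T1 → T1) (ρ : T1) : Prop :=
  ∃ F : ℝ → ℝ, IsLiftOf F f ∧
    ∀ x : ℝ, Tendsto (fun n : ℕ => ((F^[n] x / (n : ℝ) : ℝ) : T1)) atTop (nhds ρ)

variable (G : Type*) [Group G] [MulAction G T1]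

/-- A set is invariant under the action. -/
def InvariantSet (S : Set T1) : Prop := ∀ g : G, ∀ x ∈ S, g • x ∈ S

/-- A minimal set: nonempty, closed, invariant, with no proper nonempty closed
invariant subset. -/
def IsMinimalSet (S : Set T1) : Prop :=
  S.Nonempty ∧ IsClosed S ∧ InvariantSet G S ∧
    ∀ Z : Set T1, Z.Nonempty → IsClosed Z → InvariantSet G Z → Z ⊆ S → Z = S

/-- The action (by homeomorphisms) is orientation preserving. -/
def OrientationPreservingAction : Prop :=
  (∀ g : G, Continuous fun x : T1 => g • x) ∧
    ∀ g : G, OrientationPreservingMap fun x : T1 => g • x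

/-- The action is free. -/
def FreeAction : Prop := ∀ (g : G) (x : T1), g • x = x → g = 1

/-- A Denjoy action: orientation preserving, non-minimal, all orbits infinite. -/
def IsDenjoy : Prop :=
  OrientationPreservingAction G ∧ ¬ IsMinimalSet G (Set.univ : Set T1) ∧
    ∀ x : T1, (MulAction.orbit G x).Infinite

/-!
A homeomorphism of the circle without fixed points has degree one, so every element of `G` lifts to
an increasing homeomorphism of the line commuting with integer translations. All these lifts form a
group acting freely on the line, in which any two elements are comparable pointwise; hence, as in
Hölder's theorem, the translation number is a homomorphism from this group to `ℝ`. It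
follows that the lifted action is semiconjugate to an action by translations, and pushing Lebesgue
measure forward along the semiconjugacy gives an invariant measure. Conversely, the distribution
function `H` of any invariant measure, extended to the line, satisfies `H (u x) = H x + τ u` for
every lift `u`. Since `G` is infinite, the translation numbers `τ u` are dense, which forces two
monotone solutions of these equations to differ by a constant.
-/

open CircleDeg1Lift (translationNumber translationNumber_translate)

section Lifts

theorem coe_eq_coe_iff_exists_int {x y : ℝ} : (x : T1) = y ↔ ∃ n : ℤ, x = y + n := by
  rw [← sub_eq_zero, ← AddCircle.coe_sub, AddCircle.coe_eq_zero_iff]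
  simp only [zsmul_one, eq_comm, sub_eq_iff_eq_add']

theorem exists_int_forall_eq_add {X : Type*} [TopologicalSpace X] [ConnectedSpace X]
    {F K : X → ℝ} (hF : Continuous F) (hK : Continuous K) (h : ∀ x, (F x : T1) = K x) :
    ∃ n : ℤ, ∀ x, F x = K x + n := by
  obtain ⟨x₀⟩ := ‹ConnectedSpace X›.toNonempty
  obtain ⟨n, hn⟩ := coe_eq_coe_iff_exists_int.1 (h x₀)
  have hlift : (fun t : ℝ => (t : T1)) ∘ F = (fun t : ℝ => (t : T1)) ∘ fun x => K x + n :=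
    funext fun x => (h x).trans (coe_eq_coe_iff_exists_int.2 ⟨n, rfl⟩).symm
  exact ⟨n, congrFun <|
    (AddCircle.isCoveringMap_coe (1 : ℝ)).eq_of_comp_eq hF (by fun_prop) hlift x₀ hn⟩

theorem exists_continuous_lift {X : Type*} [TopologicalSpace X] [SimplyConnectedSpace X]
    [LocallyPathConnectedSpace X] {f : X → T1} (hf : Continuous f) :
    ∃ F : X → ℝ, Continuous F ∧ ∀ x, (F x : T1) = f x := by
  obtain ⟨x₀⟩ : Nonempty X := inferInstance
  obtain ⟨e, he⟩ := QuotientAddGroup.mk_surjective (f x₀)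
  obtain ⟨F, ⟨-, hF⟩, -⟩ :=
    (AddCircle.isCoveringMap_coe (1 : ℝ)).existsUnique_continuousMap_lifts ⟨f, hf⟩ x₀ e he
  exact ⟨F, F.continuous, congrFun hF⟩

theorem exists_degree {f : T1 → T1} {F : ℝ → ℝ} (hF : Continuous F)
    (hlift : ∀ x : ℝ, (F x : T1) = f x) : ∃ k : ℤ, ∀ x, F (x + 1) = F x + k :=
  exists_int_forall_eq_add (F := fun x => F (x + 1)) (by fun_prop) hF fun x => by
    rw [hlift, hlift, AddCircle.coe_add_period]

theorem exists_fixedPoint_of_degree_ne_one {f : T1 → T1} {F : ℝ → ℝ} (hF : Continuous F)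
    (hlift : ∀ x : ℝ, (F x : T1) = f x) {k : ℤ} (hk : F 1 = F 0 + k) (hk1 : k ≠ 1) :
    ∃ x, f x = x := by
  -- Over `[0, 1]` the function `F x - x` changes by the nonzero integer `k - 1`.
  obtain ⟨n, x, hx⟩ : ∃ (n : ℤ) (x : ℝ), F x - x = n := by
    have hcont : Continuous fun x => F x - x := by fun_prop
    rcases hk1.lt_or_gt with h | h
    · have hk0 : (k : ℝ) ≤ 0 := by exact_mod_cast Int.lt_add_one_iff.1 h
      exact ⟨⌊F 0⌋, mem_range_of_exists_le_of_exists_ge hcont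
        ⟨1, by linarith [Int.sub_one_lt_floor (F 0)]⟩ ⟨0, by simpa using Int.floor_le (F 0)⟩⟩
    · have hk2 : (2 : ℝ) ≤ k := by exact_mod_cast Int.add_one_le_iff.2 h
      exact ⟨⌈F 0⌉, mem_range_of_exists_le_of_exists_ge hcont
        ⟨0, by simpa using Int.le_ceil (F 0)⟩ ⟨1, by linarith [Int.ceil_lt_add_one (F 0)]⟩⟩
  exact ⟨x, (hlift x).symm.trans (coe_eq_coe_iff_exists_int.2 ⟨n, by linarith⟩)⟩

theorem orientationPreservingMap_of_forall_ne {f : T1 → T1} (hf : Continuous f)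
    (hinj : Injective f) (hfix : ∀ x, f x ≠ x) : OrientationPreservingMap f := by
  obtain ⟨F, hF, hlift⟩ : ∃ F : ℝ → ℝ, Continuous F ∧ ∀ x : ℝ, (F x : T1) = f x :=
    exists_continuous_lift (hf.comp (AddCircle.continuous_mk' 1))
  obtain ⟨k, hk⟩ := exists_degree hF hlift
  obtain rfl : k = 1 := by
    by_contra hk1
    obtain ⟨x, hx⟩ := exists_fixedPoint_of_degree_ne_one hF hlift (by simpa using hk 0) hk1
    exact hfix x hx
  have hadd : ∀ x, F (x + 1) = F x + 1 := by simpa using hk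
  have hFinj : Injective F := fun x y hxy => by
    obtain ⟨n, rfl⟩ : ∃ n : ℤ, x = y + n :=
      coe_eq_coe_iff_exists_int.1 (hinj (by rw [← hlift, ← hlift, hxy]))
    let F' : AddConstMap ℝ ℝ 1 1 := ⟨F, hadd⟩
    have hn : F y + n = F y := (AddConstMapClass.map_add_int F' y n).symm.trans hxy
    rw [add_eq_left.1 hn, add_zero]
  have hmono : StrictMono F := (hF.strictMono_of_inj hFinj).resolve_right fun hanti => by
    have hone : F 1 = F 0 + 1 := by simpa using hadd 0
    linarith [hanti (zero_lt_one' ℝ)]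
  exact ⟨F, hF, hmono, hadd, hlift⟩

theorem IsLiftOf.exists_unit {F : ℝ → ℝ} {f : T1 → T1} (hF : IsLiftOf F f) :
    ∃ u : CircleDeg1Liftˣ, ⇑(u : CircleDeg1Lift) = F := by
  obtain ⟨hcont, hmono, hadd, -⟩ := hF
  let F' : CircleDeg1Lift := ⟨⟨F, hmono.monotone⟩, hadd⟩
  obtain ⟨u, hu⟩ : IsUnit F' := CircleDeg1Lift.isUnit_iff_bijective.2
    ⟨hmono.injective, F'.continuous_iff_surjective.1 hcont⟩
  exact ⟨u, by rw [hu]; rfl⟩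

theorem continuous_unit (u : CircleDeg1Liftˣ) : Continuous (u : ℝ → ℝ) := by
  simpa using (CircleDeg1Lift.toOrderIso u).continuous

theorem strictMono_unit (u : CircleDeg1Liftˣ) : StrictMono (u : ℝ → ℝ) := by
  simpa using (CircleDeg1Lift.toOrderIso u).strictMono

end Lifts

section TranslationNumber

section OrderedMonoid

variable {M : Type*} [Monoid M] [Preorder M] [MulLeftMono M] [MulRightMono M] {a b : M}

theorem pow_mul_pow_le_mul_pow_of_mul_le_mul_swap (h : a * b ≤ b * a) (n : ℕ) :
    a ^ n * b ^ n ≤ (a * b) ^ n := by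
  induction n with
  | zero => simp
  | succ n ih =>
    calc a ^ (n + 1) * b ^ (n + 1) = a * (a ^ n * b ^ n) * b := by
          simp only [pow_succ' a, pow_succ b, mul_assoc]
      _ ≤ a * (a * b) ^ n * b := by gcongr
      _ ≤ a * (b * a) ^ n * b := by gcongr
      _ = (a * b) ^ (n + 1) := by rw [← mul_pow_mul, mul_assoc, ← pow_succ]

theorem mul_pow_le_pow_mul_pow_of_mul_le_mul_swap (h : a * b ≤ b * a) (n : ℕ) :
    (b * a) ^ n ≤ b ^ n * a ^ n := by
  induction n with
  | zero => simp
  | succ n ih =>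
    calc (b * a) ^ (n + 1) = b * (a * b) ^ n * a := by rw [← mul_pow_mul, mul_assoc, ← pow_succ]
      _ ≤ b * (b * a) ^ n * a := by gcongr
      _ ≤ b * (b ^ n * a ^ n) * a := by gcongr
      _ = b ^ (n + 1) * a ^ (n + 1) := by simp only [pow_succ' b, pow_succ a, mul_assoc]

end OrderedMonoid

instance : MulLeftMono CircleDeg1Lift := ⟨fun f _ _ h x => f.mono (h x)⟩

instance : MulRightMono CircleDeg1Lift := ⟨fun f _ _ h x => h (f x)⟩

theorem abs_translationNumber_mul_sub_le (f g : CircleDeg1Lift) :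
    |translationNumber (f * g) - (translationNumber f + translationNumber g)| ≤ 4 := by
  have hmul := CircleDeg1Lift.dist_map_map_zero_lt f g
  have hf := f.dist_map_zero_translationNumber_le
  have hg := g.dist_map_zero_translationNumber_le
  have hfg := (f * g).dist_map_zero_translationNumber_le
  rw [CircleDeg1Lift.mul_apply] at hfg
  rw [Real.dist_eq, abs_le] at hf hg hfg
  rw [Real.dist_eq, abs_lt] at hmul
  rw [abs_le]
  constructor <;> linarith

theorem translationNumber_mul_comm (f g : CircleDeg1Lift) :
    translationNumber (f * g) = translationNumber (g * f) :=
  CircleDeg1Lift.translationNumber_eq_of_semiconjBy (f := g) (mul_assoc g f g).symm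

theorem eq_zero_of_forall_abs_nat_mul_le {d C : ℝ} (h : ∀ n : ℕ, |n * d| ≤ C) : d = 0 := by
  by_contra hd
  obtain ⟨n, hn⟩ := exists_lt_nsmul (abs_pos.2 hd) C
  rw [nsmul_eq_mul, ← Nat.abs_cast, ← abs_mul] at hn
  exact (h n).not_gt hn

theorem translationNumber_mul_of_mul_le_mul_swap {f g : CircleDeg1Lift} (h : f * g ≤ g * f) :
    translationNumber (f * g) = translationNumber f + translationNumber g := by
  -- Homogenization: after passing to `n`-th powers the quasimorphism defect is still at most `4`.
  refine sub_eq_zero.1 (eq_zero_of_forall_abs_nat_mul_le (C := 4) fun n => ?_)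
  have hlower : translationNumber (f ^ n * g ^ n) ≤ n * translationNumber (f * g) := by
    rw [← CircleDeg1Lift.translationNumber_pow]
    exact CircleDeg1Lift.translationNumber_mono (pow_mul_pow_le_mul_pow_of_mul_le_mul_swap h n)
  have hupper : n * translationNumber (f * g) ≤ translationNumber (g ^ n * f ^ n) := by
    rw [translationNumber_mul_comm f g, ← CircleDeg1Lift.translationNumber_pow]
    exact CircleDeg1Lift.translationNumber_mono (mul_pow_le_pow_mul_pow_of_mul_le_mul_swap h n)
  have hfg := abs_le.1 (abs_translationNumber_mul_sub_le (f ^ n) (g ^ n))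
  have hgf := abs_le.1 (abs_translationNumber_mul_sub_le (g ^ n) (f ^ n))
  simp only [CircleDeg1Lift.translationNumber_pow] at hfg hgf
  rw [abs_le]
  constructor <;> linarith

end TranslationNumber

/-- A group of lifts acts freely on the line if only the identity has a fixed point. -/
def ActsFreelyOnLine (Λ : Subgroup CircleDeg1Liftˣ) : Prop :=
  ∀ u ∈ Λ, ∀ x : ℝ, u x = x → u = 1

namespace ActsFreelyOnLine

variable {Λ : Subgroup CircleDeg1Liftˣ}

theorem eq_of_apply_eq (hΛ : ActsFreelyOnLine Λ) {u v : CircleDeg1Liftˣ} (hu : u ∈ Λ)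
    (hv : v ∈ Λ) {x : ℝ} (h : u x = v x) : u = v := by
  refine (inv_mul_eq_one.1 (hΛ (v⁻¹ * u) (mul_mem (inv_mem hv) hu) x ?_)).symm
  rw [Units.val_mul, CircleDeg1Lift.mul_apply, h, CircleDeg1Lift.units_inv_apply_apply]

theorem le_total (hΛ : ActsFreelyOnLine Λ) {u v : CircleDeg1Liftˣ} (hu : u ∈ Λ) (hv : v ∈ Λ) :
    (u : CircleDeg1Lift) ≤ v ∨ (v : CircleDeg1Lift) ≤ u := by
  by_contra! hne
  obtain ⟨x, hx⟩ : ∃ x, v x < u x := by simpa only [not_le] using not_forall.1 hne.1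
  obtain ⟨y, hy⟩ : ∃ y, u y < v y := by simpa only [not_le] using not_forall.1 hne.2
  obtain ⟨z, hz⟩ := mem_range_of_exists_le_of_exists_ge
    ((continuous_unit u).sub (continuous_unit v))
    ⟨y, (sub_neg.2 hy).le⟩ ⟨x, (sub_pos.2 hx).le⟩
  exact hx.ne' (by rw [hΛ.eq_of_apply_eq hu hv (sub_eq_zero.1 hz)])

theorem translationNumber_mul (hΛ : ActsFreelyOnLine Λ) {u v : CircleDeg1Liftˣ} (hu : u ∈ Λ)
    (hv : v ∈ Λ) :
    translationNumber (u * v : CircleDeg1Lift) = translationNumber u + translationNumber v := by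
  rcases hΛ.le_total (mul_mem hu hv) (mul_mem hv hu) with h | h
  · exact translationNumber_mul_of_mul_le_mul_swap h
  · rw [translationNumber_mul_comm, add_comm]
    exact translationNumber_mul_of_mul_le_mul_swap h

/-- The translation number as a homomorphism on a group of lifts acting freely on the line. -/
def translationNumberHom (hΛ : ActsFreelyOnLine Λ) : Λ →* Multiplicative ℝ :=
  MonoidHom.mk' (fun u => .ofAdd (translationNumber (u : CircleDeg1Liftˣ))) fun u v =>
    congrArg Multiplicative.ofAdd (hΛ.translationNumber_mul u.2 v.2)

theorem exists_semiconj_add_translationNumber (hΛ : ActsFreelyOnLine Λ) :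
    ∃ K : CircleDeg1Lift, ∀ u ∈ Λ, Semiconj K (translationNumber u + ·) u := by
  obtain ⟨K, hK⟩ := CircleDeg1Lift.semiconj_of_group_action_of_forall_translationNumber_eq
    ((Units.coeHom _).comp (CircleDeg1Lift.translate.comp hΛ.translationNumberHom))
    ((Units.coeHom _).comp Λ.subtype) fun u => translationNumber_translate _
  exact ⟨K, fun u hu => hK ⟨u, hu⟩⟩

end ActsFreelyOnLine

section CircleMaps

/-- The circle map with lift `f`; `f` need not be continuous. -/
def inducedCircleMap (f : CircleDeg1Lift) : T1 → T1 :=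
  Function.Periodic.lift (f := fun t : ℝ => (f t : T1)) (c := 1) fun t => by
    simp only [f.map_add_one, AddCircle.coe_add_period]

theorem inducedCircleMap_coe (f : CircleDeg1Lift) (t : ℝ) :
    inducedCircleMap f t = (f t : T1) := rfl

theorem inducedCircleMap_one : inducedCircleMap 1 = id := by
  ext ⟨t⟩
  rfl

theorem inducedCircleMap_mul (f g : CircleDeg1Lift) :
    inducedCircleMap (f * g) = inducedCircleMap f ∘ inducedCircleMap g := by
  ext ⟨t⟩
  rfl

theorem semiconj_inducedCircleMap {K f : CircleDeg1Lift} {r : ℝ} (h : Semiconj K (r + ·) f) :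
    Semiconj (inducedCircleMap K) ((r : T1) + ·) (inducedCircleMap f) := by
  rintro ⟨t⟩
  exact congrArg (fun s : ℝ => (s : T1)) (h t)

/-- The representative of a point of the circle in the interval `(0, 1]`. -/
def circleRep (x : T1) : ℝ := AddCircle.measurableEquivIoc 1 0 x

theorem measurable_circleRep : Measurable circleRep :=
  measurable_subtype_coe.comp (AddCircle.measurableEquivIoc 1 0).measurable

theorem coe_circleRep (x : T1) : (circleRep x : T1) = x :=
  (AddCircle.measurableEquivIoc 1 0).symm_apply_apply x

theorem circleRep_pos (x : T1) : 0 < circleRep x := (AddCircle.measurableEquivIoc 1 0 x).2.1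

theorem circleRep_le_one (x : T1) : circleRep x ≤ 1 :=
  (AddCircle.measurableEquivIoc 1 0 x).2.2.trans_eq (zero_add 1)

theorem measurable_inducedCircleMap (f : CircleDeg1Lift) : Measurable (inducedCircleMap f) := by
  have hrep : inducedCircleMap f = fun x => (f (circleRep x) : T1) :=
    funext fun x => congrArg (inducedCircleMap f) (coe_circleRep x).symm
  rw [hrep]
  exact AddCircle.measurable_mk'.comp (f.monotone.measurable.comp measurable_circleRep)

end CircleMaps

theorem ActsFreelyOnLine.exists_measurePreserving {Λ : Subgroup CircleDeg1Liftˣ}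
    (hΛ : ActsFreelyOnLine Λ) :
    ∃ μ : Measure T1, IsProbabilityMeasure μ ∧
      ∀ u ∈ Λ, MeasurePreserving (inducedCircleMap u) μ μ := by
  obtain ⟨K, hK⟩ := hΛ.exists_semiconj_add_translationNumber
  have hKpres := (measurable_inducedCircleMap K).measurePreserving volume
  have : IsProbabilityMeasure (volume : Measure T1) := ⟨UnitAddCircle.measure_univ⟩
  refine ⟨volume.map (inducedCircleMap K),
    Measure.isProbabilityMeasure_map (measurable_inducedCircleMap K).aemeasurable, fun u hu => ?_⟩
  exact hKpres.of_semiconj (measurePreserving_add_left volume _)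
    (semiconj_inducedCircleMap (hK u hu)) (measurable_inducedCircleMap u)

section LiftedCDF

variable (μ ν : Measure T1)

theorem integrable_floor_sub_circleRep [IsFiniteMeasure μ] (b : ℝ) :
    Integrable (fun x => (⌊b - circleRep x⌋ : ℝ)) μ := by
  refine .of_mem_Icc (b - 2) b ?_ (ae_of_all _ fun x => ⟨?_, ?_⟩)
  · exact (measurable_from_top.comp
      (measurable_const.sub measurable_circleRep).floor).aemeasurable
  · linarith [Int.sub_one_lt_floor (b - circleRep x), circleRep_le_one x]
  · linarith [Int.floor_le (b - circleRep x), circleRep_pos x]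

variable [IsProbabilityMeasure μ] [IsProbabilityMeasure ν]

/-- The distribution function of the lift of `μ` to a `1`-periodic measure on the line, normalized
to vanish at `0`. Since `⌊b - circleRep x⌋ + 1` is the signed number of lifts of `x` in `(0, b]`,
it is the expectation of that number. -/
def liftedCDF : CircleDeg1Lift where
  toFun b := (∫ x, (⌊b - circleRep x⌋ : ℝ) ∂μ) + 1
  monotone' a b hab := by
    have hle := integral_mono (integrable_floor_sub_circleRep μ a)
      (integrable_floor_sub_circleRep μ b) fun x => Int.cast_mono (Int.floor_mono (by gcongr))
    exact add_le_add_left hle 1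
  map_add_one' b := by
    simp only [add_sub_right_comm, Int.floor_add_one, Int.cast_add, Int.cast_one]
    rw [integral_add (integrable_floor_sub_circleRep μ b) (integrable_const 1)]
    simp

theorem liftedCDF_apply (b : ℝ) :
    liftedCDF μ b = (∫ x, (⌊b - circleRep x⌋ : ℝ) ∂μ) + 1 := rfl

theorem measureReal_circleRep_le {t : ℝ} (ht : t ∈ Icc (0 : ℝ) 1) :
    μ.real {x | circleRep x ≤ t} = liftedCDF μ t := by
  have hfloor (x : T1) :
      ((⌊t - circleRep x⌋ : ℤ) : ℝ) = {x | circleRep x ≤ t}.indicator 1 x - 1 := by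
    have hpos := circleRep_pos x
    have hle := circleRep_le_one x
    rcases le_or_gt (circleRep x) t with h | h
    · have hzero : ⌊t - circleRep x⌋ = 0 :=
        Int.floor_eq_zero_iff.2 ⟨by linarith, by linarith [ht.2]⟩
      simp [hzero, h]
    · have hneg : ⌊t - circleRep x⌋ = -1 :=
        Int.floor_eq_iff.2 ⟨by push_cast; linarith [ht.1], by push_cast; linarith⟩
      simp [hneg, h.not_ge]
  have hmeas : MeasurableSet {x | circleRep x ≤ t} := measurableSet_le measurable_circleRep
    measurable_const
  simp only [liftedCDF_apply, hfloor]
  rw [integral_sub ((integrable_const 1).indicator hmeas) (integrable_const 1),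
    integral_indicator_one hmeas]
  simp

theorem liftedCDF_zero : liftedCDF μ 0 = 0 := by
  rw [← measureReal_circleRep_le μ (left_mem_Icc.2 zero_le_one)]
  simp [(circleRep_pos _).not_ge]

variable {μ ν}

theorem eq_of_liftedCDF_eq (h : liftedCDF μ = liftedCDF ν) : μ = ν := by
  have hrep : μ.map circleRep = ν.map circleRep := by
    have := Measure.isProbabilityMeasure_map (μ := μ) measurable_circleRep.aemeasurable
    refine Measure.ext_of_Iic _ _ fun b => ?_
    have hclamp : circleRep ⁻¹' Iic b = {x | circleRep x ≤ max 0 (min b 1)} := by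
      ext x
      simp [(circleRep_pos x).not_ge, circleRep_le_one]
    rw [Measure.map_apply measurable_circleRep measurableSet_Iic,
      Measure.map_apply measurable_circleRep measurableSet_Iic, hclamp,
      ← measureReal_eq_measureReal_iff]
    have hmem : max 0 (min b 1) ∈ Icc (0 : ℝ) 1 :=
      ⟨le_max_left _ _, max_le zero_le_one (min_le_right _ _)⟩
    rw [measureReal_circleRep_le μ hmem, measureReal_circleRep_le ν hmem, h]
  have hcoe (ρ : Measure T1) : (ρ.map circleRep).map (fun t : ℝ => (t : T1)) = ρ := by
    rw [Measure.map_map AddCircle.measurable_mk' measurable_circleRep]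
    exact (Measure.map_congr (ae_of_all _ coe_circleRep)).trans Measure.map_id
  rw [← hcoe μ, ← hcoe ν, hrep]

theorem floor_apply_sub_apply (u : CircleDeg1Liftˣ) (b t : ℝ) : ⌊u b - u t⌋ = ⌊b - t⌋ := by
  have hlower := u.val.mono (le_sub_iff_add_le'.1 (Int.floor_le (b - t)))
  have hupper := strictMono_unit u (sub_lt_iff_lt_add'.1 (Int.lt_floor_add_one (b - t)))
  rw [← add_assoc, CircleDeg1Lift.map_add_one] at hupper
  rw [CircleDeg1Lift.map_add_int] at hlower hupper
  exact Int.floor_eq_iff.2 ⟨by linarith, by linarith⟩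

theorem floor_sub_circleRep_inducedCircleMap (u : CircleDeg1Liftˣ) (a b : ℝ) (x : T1) :
    ⌊u b - circleRep (inducedCircleMap u x)⌋ - ⌊u a - circleRep (inducedCircleMap u x)⌋ =
      ⌊b - circleRep x⌋ - ⌊a - circleRep x⌋ := by
  obtain ⟨n, hn⟩ : ∃ n : ℤ, circleRep (inducedCircleMap u x) = u (circleRep x) + n := by
    rw [← coe_eq_coe_iff_exists_int, coe_circleRep, ← inducedCircleMap_coe, coe_circleRep]
  simp only [hn, ← sub_sub, Int.floor_sub_intCast, floor_apply_sub_apply, sub_sub_sub_cancel_right]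

theorem liftedCDF_apply_sub_apply {u : CircleDeg1Liftˣ}
    (hu : MeasurePreserving (inducedCircleMap u) μ μ) (a b : ℝ) :
    liftedCDF μ (u b) - liftedCDF μ (u a) = liftedCDF μ b - liftedCDF μ a := by
  have hintegrable := integrable_floor_sub_circleRep μ
  calc liftedCDF μ (u b) - liftedCDF μ (u a)
      = ∫ x, ((⌊u b - circleRep x⌋ : ℝ) - ⌊u a - circleRep x⌋) ∂μ := by
        rw [integral_sub (hintegrable _) (hintegrable _), liftedCDF_apply, liftedCDF_apply,
          add_sub_add_right_eq_sub]
    _ = ∫ x, ((⌊u b - circleRep (inducedCircleMap u x)⌋ : ℝ) -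
          ⌊u a - circleRep (inducedCircleMap u x)⌋) ∂μ := by
        conv_lhs => rw [← hu.map_eq]
        refine integral_map hu.aemeasurable ?_
        rw [hu.map_eq]
        exact ((hintegrable _).sub (hintegrable _)).aestronglyMeasurable
    _ = ∫ x, ((⌊b - circleRep x⌋ : ℝ) - ⌊a - circleRep x⌋) ∂μ := by
        simp only [← Int.cast_sub, floor_sub_circleRep_inducedCircleMap]
    _ = liftedCDF μ b - liftedCDF μ a := by
        rw [integral_sub (hintegrable _) (hintegrable _), liftedCDF_apply, liftedCDF_apply,
          add_sub_add_right_eq_sub]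

theorem liftedCDF_apply_eq_add_translationNumber {u : CircleDeg1Liftˣ}
    (hu : MeasurePreserving (inducedCircleMap u) μ μ) (b : ℝ) :
    liftedCDF μ (u b) = liftedCDF μ b + translationNumber u := by
  have hconj (x : ℝ) : liftedCDF μ (u x) = liftedCDF μ (u 0) + liftedCDF μ x := by
    linarith [liftedCDF_apply_sub_apply hu 0 x, liftedCDF_zero μ]
  have hτ : translationNumber u = liftedCDF μ (u 0) :=
    (CircleDeg1Lift.translationNumber_eq_of_semiconj (f := liftedCDF μ)
      (g₂ := CircleDeg1Lift.translate (.ofAdd (liftedCDF μ (u 0)))) hconj).trans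
        (translationNumber_translate _)
  rw [hconj, hτ, add_comm]

end LiftedCDF

section UniqueErgodicity

theorem sub_eq_sub_of_monotone_of_denseRange {ι α : Type*} [LinearOrder α] {H₁ H₂ : α → ℝ}
    (hH₁ : Monotone H₁) (hH₂ : Monotone H₂) {u : ι → α → α} {τ : ι → ℝ} (hτ : DenseRange τ)
    (hu₁ : ∀ i x, H₁ (u i x) = H₁ x + τ i) (hu₂ : ∀ i x, H₂ (u i x) = H₂ x + τ i) (x y : α) :
    H₁ x - H₂ x = H₁ y - H₂ y := by
  suffices hle : ∀ x y, H₁ y - H₂ y ≤ H₁ x - H₂ x from (hle y x).antisymm (hle x y)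
  intro x y
  by_contra! hlt
  obtain ⟨_, ⟨i, rfl⟩, hi₁, hi₂⟩ :=
    hτ.exists_between (show H₁ x - H₁ y < H₂ x - H₂ y by linarith)
  have hxu : x < u i y := hH₁.reflect_lt (by linarith [hu₁ i y])
  have hux : u i y < x := hH₂.reflect_lt (by linarith [hu₂ i y])
  exact hxu.not_gt hux

theorem eq_of_forall_measurePreserving {ι : Type*} {u : ι → CircleDeg1Liftˣ}
    (hdense : DenseRange fun i => translationNumber (u i)) {μ ν : Measure T1}
    [IsProbabilityMeasure μ] [IsProbabilityMeasure ν]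
    (hμ : ∀ i, MeasurePreserving (inducedCircleMap (u i)) μ μ)
    (hν : ∀ i, MeasurePreserving (inducedCircleMap (u i)) ν ν) : μ = ν := by
  refine eq_of_liftedCDF_eq (CircleDeg1Lift.ext fun x => ?_)
  have hsub := sub_eq_sub_of_monotone_of_denseRange (liftedCDF μ).monotone (liftedCDF ν).monotone
    hdense (fun i => liftedCDF_apply_eq_add_translationNumber (hμ i))
    (fun i => liftedCDF_apply_eq_add_translationNumber (hν i)) x 0
  rwa [liftedCDF_zero, liftedCDF_zero, sub_self, sub_eq_zero] at hsub

theorem dense_of_infinite_image_coe {S : AddSubgroup ℝ} (hone : 1 ∈ S)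
    (hinf : ((fun t : ℝ => (t : T1)) '' S).Infinite) : Dense (S : Set ℝ) := by
  refine S.dense_or_cyclic.resolve_right ?_
  rintro ⟨a, rfl⟩
  obtain ⟨n, hn⟩ := AddSubgroup.mem_closure_singleton.1 hone
  have hn0 : n ≠ 0 := by
    rintro rfl
    simp at hn
  refine hinf ((AddCircle.finite_torsion_of_isSMulRegular_int (1 : ℝ) n
    (.of_right_eq_zero_of_smul fun _ => by simp [hn0])).subset ?_)
  rintro _ ⟨t, ht, rfl⟩
  obtain ⟨k, rfl⟩ := AddSubgroup.mem_closure_singleton.1 ht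
  rw [mem_ofPred, ← AddCircle.coe_zsmul, smul_comm, hn, AddCircle.coe_eq_zero_iff]
  exact ⟨k, rfl⟩

end UniqueErgodicity

theorem ActsFreelyOnLine.exists_inducedCircleMap_eq {Λ : Subgroup CircleDeg1Liftˣ}
    (hΛ : ActsFreelyOnLine Λ) {u v : CircleDeg1Liftˣ} (hu : u ∈ Λ) (hv : v ∈ Λ)
    (h : (translationNumber u : T1) = translationNumber v) :
    ∃ x, inducedCircleMap u x = inducedCircleMap v x := by
  obtain ⟨n, hn⟩ := coe_eq_coe_iff_exists_int.1 h
  have huv : translationNumber (u * v⁻¹ : CircleDeg1Lift) = n := by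
    rw [hΛ.translationNumber_mul hu (inv_mem hv), CircleDeg1Lift.translationNumber_units_inv, hn]
    ring
  obtain ⟨x, hx⟩ :=
    (CircleDeg1Lift.translationNumber_eq_int_iff _ (continuous_unit (u * v⁻¹))).1 huv
  refine ⟨(v⁻¹ x : ℝ), coe_eq_coe_iff_exists_int.2 ⟨n, ?_⟩⟩
  rw [CircleDeg1Lift.units_apply_inv_apply]
  exact hx

section GroupActions

/-- The group of all lifts to the line of the homeomorphisms by which `G` acts on the circle. -/
def liftSubgroup : Subgroup CircleDeg1Liftˣ where
  carrier := {u | ∃ g : G, inducedCircleMap u = (g • ·)}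
  one_mem' := ⟨1, by ext; simp [inducedCircleMap_one]⟩
  mul_mem' := by
    rintro u v ⟨g, hg⟩ ⟨h, hh⟩
    exact ⟨g * h, by ext; simp [inducedCircleMap_mul, hg, hh, mul_smul]⟩
  inv_mem' := by
    rintro u ⟨g, hg⟩
    refine ⟨g⁻¹, funext fun x => eq_inv_smul_iff.2 ?_⟩
    have hcomp := congrFun (inducedCircleMap_mul (u : CircleDeg1Lift) ↑u⁻¹) x
    rw [Units.mul_inv, inducedCircleMap_one, hg] at hcomp
    exact hcomp.symm

theorem translate_one_mem_liftSubgroup :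
    CircleDeg1Lift.translate (.ofAdd 1) ∈ liftSubgroup G := by
  refine ⟨1, funext ?_⟩
  rintro ⟨t⟩
  exact (coe_eq_coe_iff_exists_int.2 ⟨1, by simp [add_comm]⟩).trans (one_smul G _).symm

variable {G}

theorem FreeAction.eq_of_smul_eq (hfree : FreeAction G) {g h : G} {x : T1} (hx : g • x = h • x) :
    g = h :=
  (inv_mul_eq_one.1 (hfree (h⁻¹ * g) x (by rw [mul_smul, hx, inv_smul_smul]))).symm

theorem FreeAction.actsFreelyOnLine (hfree : FreeAction G) :
    ActsFreelyOnLine (liftSubgroup G) := by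
  rintro u ⟨g, hg⟩ x hx
  obtain rfl : g = 1 := hfree g x (by rw [← congrFun hg, inducedCircleMap_coe, hx])
  obtain ⟨n, hn⟩ := exists_int_forall_eq_add (continuous_unit u) continuous_id fun t =>
    (congrFun hg t).trans (one_smul G _)
  have hn0 : (n : ℝ) = 0 := by simpa [hx] using hn x
  exact Units.ext (CircleDeg1Lift.ext fun t => by simpa [hn0] using hn t)

theorem FreeAction.orientationPreservingAction (hfree : FreeAction G)
    (hcont : ∀ g : G, Continuous fun x : T1 => g • x) :
    OrientationPreservingAction G := by
  refine ⟨hcont, fun g => ?_⟩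
  rcases eq_or_ne g 1 with rfl | hg
  · exact ⟨id, continuous_id, strictMono_id, fun _ => rfl, fun _ => (one_smul G _).symm⟩
  · exact orientationPreservingMap_of_forall_ne (hcont g) (MulAction.injective g)
      fun x hx => hg (hfree g x hx)

theorem FreeAction.exists_inducedCircleMap_eq_smul (hfree : FreeAction G)
    (hcont : ∀ g : G, Continuous fun x : T1 => g • x) (g : G) :
    ∃ u : CircleDeg1Liftˣ, inducedCircleMap u = (g • ·) := by
  obtain ⟨F, hF⟩ := (hfree.orientationPreservingAction hcont).2 g
  obtain ⟨u, rfl⟩ := hF.exists_unit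
  refine ⟨u, funext ?_⟩
  rintro ⟨t⟩
  exact hF.2.2.2 t

theorem FreeAction.denseRange_translationNumber [Infinite G] (hfree : FreeAction G)
    (hcont : ∀ g : G, Continuous fun x : T1 => g • x) :
    DenseRange fun u : liftSubgroup G => translationNumber (u : CircleDeg1Liftˣ) := by
  choose u hu using hfree.exists_inducedCircleMap_eq_smul hcont
  have hinj : Injective fun g => (translationNumber (u g) : T1) := fun g h hgh => by
    obtain ⟨x, hx⟩ := hfree.actsFreelyOnLine.exists_inducedCircleMap_eq ⟨g, hu g⟩ ⟨h, hu h⟩ hgh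
    rw [hu, hu] at hx
    exact hfree.eq_of_smul_eq hx
  refine dense_of_infinite_image_coe
    (S := hfree.actsFreelyOnLine.translationNumberHom.toAdditiveLeft.range)
    ⟨⟨_, translate_one_mem_liftSubgroup G⟩, translationNumber_translate 1⟩
    ((infinite_range_of_injective hinj).mono ?_)
  rintro _ ⟨g, rfl⟩
  exact ⟨_, ⟨⟨u g, g, hu g⟩, rfl⟩, rfl⟩

theorem FreeAction.forall_measurePreserving_iff (hfree : FreeAction G)
    (hcont : ∀ g : G, Continuous fun x : T1 => g • x) {μ : Measure T1} :
    (∀ u : liftSubgroup G, MeasurePreserving (inducedCircleMap (u : CircleDeg1Liftˣ)) μ μ) ↔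
      ∀ g : G, μ.map (fun x => g • x) = μ := by
  refine ⟨fun h g => ?_, ?_⟩
  · obtain ⟨u, hu⟩ := hfree.exists_inducedCircleMap_eq_smul hcont g
    exact hu ▸ (h ⟨u, g, hu⟩).map_eq
  · rintro h ⟨u, g, hg⟩
    exact hg ▸ ⟨(hcont g).measurable, h g⟩

end GroupActions

theorem statement8_general (G : Type*) [Group G] [Infinite G] [MulAction G T1]
    (hcont : ∀ g : G, Continuous fun x : T1 => g • x) (hfree : FreeAction G) :
    ∃! μ : Measure T1, IsProbabilityMeasure μ ∧ μ.Regular ∧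
      ∀ g : G, Measure.map (fun x : T1 => g • x) μ = μ := by
  obtain ⟨μ, hμ, hpres⟩ := hfree.actsFreelyOnLine.exists_measurePreserving
  have hinvariant := fun u : liftSubgroup G => hpres u u.2
  refine ⟨μ, ⟨hμ, inferInstance, (hfree.forall_measurePreserving_iff hcont).1 hinvariant⟩, ?_⟩
  rintro ν ⟨hν, -, hinv⟩
  exact eq_of_forall_measurePreserving (hfree.denseRange_translationNumber hcont)
    ((hfree.forall_measurePreserving_iff hcont).2 hinv) hinvariant

/-- every free action of a countably infinite discrete abelian group
on the circle is uniquely ergodic: there is exactly one `G`-invariant regular Borel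
probability measure on `𝕋`. -/
theorem statement8 (G : Type*) [CommGroup G] [Countable G] [Infinite G] [MulAction G T1]
    (hcont : ∀ g : G, Continuous fun x : T1 => g • x)
    (hfree : FreeAction G) :
    ∃! μ : Measure T1, IsProbabilityMeasure μ ∧ μ.Regular ∧
      ∀ g : G, Measure.map (fun x : T1 => g • x) μ = μ :=
  statement8_general G hcont hfree
end
end

section
/- Let G ↷ 𝕋 be a free action of a countably infinite discrete abelian group, with unique invariant probability measure μ. Then the crossed product C(𝕋) ⋊ G has a unique tracial state τ, given on generators by τ(f λ_g) = ∫_𝕋 f dμ when g = e and τ(f λ_g) = 0 when g ≠ e; moreover τ is faithful if and only if the action is minimal. -/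
open MeasureTheory Topology Filter Set Function

noncomputable section

variable (G : Type*) [Group G] [MulAction G T1]

variable {G}

/-- A model of the (reduced) crossed product `C(𝕋) ⋊ G`: a unital C*-algebra `A`
together with a unital embedding of `C(𝕋)`, a unitary representation of `G`
satisfying the covariance relation, such that these generate `A`, and a faithful
conditional expectation onto `C(𝕋)` killing the off-diagonal terms.  (These data
characterise the reduced crossed product up to isomorphism.) -/
structure CrossedProductData (G : Type*) [Group G] [MulAction G T1] (A : Type*)
    [NormedRing A] [StarRing A] [CStarRing A] [NormedAlgebra ℂ A]
    [StarModule ℂ A] [CompleteSpace A] where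
  cont_smul : ∀ g : G, Continuous fun x : T1 => g • x
  iota : C(T1, ℂ) →⋆ₐ[ℂ] A
  iota_injective : Function.Injective iota
  iota_isometry : ∀ f : C(T1, ℂ), ‖iota f‖ = ‖f‖
  lam : G → A
  lam_unitary : ∀ g : G, lam g ∈ unitary A
  lam_one : lam 1 = 1
  lam_mul : ∀ g h : G, lam (g * h) = lam g * lam h
  covariance : ∀ (g : G) (f : C(T1, ℂ)),
    lam g * iota f * star (lam g) =
      iota (f.comp ⟨fun x : T1 => g⁻¹ • x, cont_smul g⁻¹⟩)
  generates : closure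
      (Submodule.span ℂ {a : A | ∃ (f : C(T1, ℂ)) (g : G), a = iota f * lam g} :
        Set A) = Set.univ
  E : A →ₗ[ℂ] C(T1, ℂ)
  E_cont : Continuous E
  E_faithful : ∀ a : A, E (star a * a) = 0 → a = 0
  E_diag : ∀ f : C(T1, ℂ), E (iota f) = f
  E_off : ∀ (f : C(T1, ℂ)) (g : G), g ≠ 1 → E (iota f * lam g) = 0

/-- A tracial state on a unital C*-algebra. -/
def IsTracialState {A : Type*} [NormedRing A] [StarRing A] [CStarRing A]
    [NormedAlgebra ℂ A] [StarModule ℂ A] [CompleteSpace A]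
    (τ : A →ₗ[ℂ] ℂ) : Prop :=
  Continuous τ ∧ τ 1 = 1 ∧ (∀ a b : A, τ (a * b) = τ (b * a)) ∧
    ∀ a : A, ∃ r : ℝ, 0 ≤ r ∧ τ (star a * a) = (r : ℂ)

/-! Let `z : 𝕋 → ℂ` be the coordinate. If the action is free and `g ≠ 1`, then `z - z ∘ g⁻¹`
vanishes nowhere, so it is invertible in `C(𝕋)`. Since `λ_g z = (z ∘ g⁻¹) λ_g`, every `f λ_g` is
then a commutator `[z, k λ_g]` with `k = f / (z - z ∘ g⁻¹)`, and each trace vanishes on it. On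
`C(𝕋)` a tracial state is an invariant state, because `λ_g` implements the action, hence it is
integration against `μ`. So the only tracial state is `a ↦ ∫ E(a) dμ`.

As `E` is faithful, this trace is faithful exactly when `μ` has full support. Under minimality an
invariant measure has full support. Conversely, a nonempty closed invariant set carries an
invariant measure, by Krylov–Bogoliubov averaging for one element at a time (averaging preserves
invariance under commuting maps) and compactness; this measure is `μ`, so the set is everything
when `μ` has full support. -/

section InvariantMeasures

open scoped BoundedContinuousFunction NNReal

variable {X : Type*} [MeasurableSpace X]

theorem smulInvariantMeasure_iff_forall_map_eq {H : Type*} [SMul H X] [MeasurableConstSMul H X]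
    {μ : Measure X} : SMulInvariantMeasure H X μ ↔ ∀ g : H, μ.map (fun x => g • x) = μ := by
  refine ⟨fun _ g => (measurePreserving_smul g μ).map_eq, fun h => ⟨fun g s hs => ?_⟩⟩
  rw [← Measure.map_apply (measurable_const_smul g) hs, h]

/-- The Krylov–Bogoliubov average `(μ + T_* μ + ⋯ + (Tⁿ)_* μ) / (n + 1)` of `μ` along `T`. -/
def orbitAverage (T : X → X) (μ : Measure X) (n : ℕ) : Measure X :=
  (n + 1 : ℝ≥0)⁻¹ • ∑ k ∈ Finset.range (n + 1), μ.map T^[k]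

theorem isProbabilityMeasure_orbitAverage {T : X → X} (hT : Measurable T) (μ : Measure X)
    [IsProbabilityMeasure μ] (n : ℕ) : IsProbabilityMeasure (orbitAverage T μ n) := by
  have hmass (k : ℕ) : μ.map T^[k] univ = 1 := by
    rw [Measure.map_apply (hT.iterate k) MeasurableSet.univ, preimage_univ, measure_univ]
  constructor
  simp only [orbitAverage, Measure.smul_apply, Measure.finsetSum_apply, hmass, Finset.sum_const,
    Finset.card_range, nsmul_eq_mul, mul_one, ENNReal.smul_def, smul_eq_mul]
  rw [ENNReal.coe_inv (by positivity)]
  push_cast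
  exact ENNReal.inv_mul_cancel (by simp) (by finiteness)

theorem map_orbitAverage_of_commute {S T : X → X} (hS : Measurable S) (hT : Measurable T)
    (hST : Function.Commute S T) {μ : Measure X} (hμ : μ.map S = μ) (n : ℕ) :
    (orbitAverage T μ n).map S = orbitAverage T μ n := by
  have hterm (k : ℕ) : (μ.map T^[k]).map S = μ.map T^[k] := by
    rw [Measure.map_map hS (hT.iterate k), (hST.iterate_right k).comp_eq,
      ← Measure.map_map (hT.iterate k) hS, hμ]
  rw [orbitAverage, Measure.map_smul]
  simp only [← Measure.mapₗ_apply_of_measurable hS, map_sum]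
  simp only [Measure.mapₗ_apply_of_measurable hS, hterm]

variable [TopologicalSpace X] [BorelSpace X]

theorem integral_orbitAverage {T : X → X} (hT : Continuous T) (μ : Measure X) [IsFiniteMeasure μ]
    (f : X →ᵇ ℝ) (n : ℕ) :
    ∫ x, f x ∂orbitAverage T μ n =
      (n + 1 : ℝ)⁻¹ * ∑ k ∈ Finset.range (n + 1), ∫ x, f (T^[k] x) ∂μ := by
  rw [orbitAverage, integral_smul_nnreal_measure,
    integral_finsetSum_measure fun k _ => f.integrable _]
  simp only [integral_map (hT.iterate _).aemeasurable f.continuous.aestronglyMeasurable]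
  rfl

theorem norm_integral_comp_sub_integral_orbitAverage_le {T : X → X} (hT : Continuous T)
    (μ : Measure X) [IsProbabilityMeasure μ] (f : X →ᵇ ℝ) (n : ℕ) :
    ‖∫ x, f (T x) ∂orbitAverage T μ n - ∫ x, f x ∂orbitAverage T μ n‖ ≤
      1 / ((n : ℝ) + 1) * (2 * ‖f‖) := by
  have hbound (k : ℕ) : ‖∫ x, f (T^[k] x) ∂μ‖ ≤ ‖f‖ := by
    simpa using norm_integral_le_of_norm_le_const (μ := μ)
      (.of_forall fun x => f.norm_coe_le_norm (T^[k] x))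
  have htelescope : ∫ x, f (T x) ∂orbitAverage T μ n - ∫ x, f x ∂orbitAverage T μ n =
      (n + 1 : ℝ)⁻¹ * (∫ x, f (T^[n + 1] x) ∂μ - ∫ x, f (T^[0] x) ∂μ) := by
    have := integral_orbitAverage hT μ (f.compContinuous ⟨T, hT⟩) n
    simp only [BoundedContinuousFunction.compContinuous_apply, ContinuousMap.coe_mk,
      ← Function.iterate_succ_apply' T] at this
    rw [this, integral_orbitAverage hT, ← mul_sub, ← Finset.sum_sub_distrib,
      Finset.sum_range_sub fun k => ∫ x, f (T^[k] x) ∂μ]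
  rw [htelescope, norm_mul, one_div, Real.norm_of_nonneg (by positivity), two_mul]
  gcongr
  exact (norm_sub_le _ _).trans (add_le_add (hbound _) (hbound _))

variable [T2Space X] [CompactSpace X] [HasOuterApproxClosed X]

theorem exists_probabilityMeasure_map_eq_of_commute {T : X → X} (hT : Continuous T)
    (μ : ProbabilityMeasure X) :
    ∃ ν : ProbabilityMeasure X, (ν : Measure X).map T = ν ∧
      ∀ S : X → X, Continuous S → Function.Commute S T →
        (μ : Measure X).map S = μ → (ν : Measure X).map S = ν := by
  let average (n : ℕ) : ProbabilityMeasure X :=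
    ⟨orbitAverage T μ n, isProbabilityMeasure_orbitAverage hT.measurable μ n⟩
  let U : Ultrafilter ℕ := hyperfilter ℕ
  let ν : ProbabilityMeasure X := (U.map average).lim
  have hν : Tendsto average U (𝓝 ν) := (U.map average).le_nhds_lim
  have hmap {S : X → X} (hS : Continuous S) :
      Tendsto (fun n => (average n).map hS.aemeasurable) U (𝓝 (ν.map hS.aemeasurable)) :=
    (ProbabilityMeasure.continuous_map hS).continuousAt.tendsto.comp hν
  refine ⟨ν, ?_, fun S hS hST hμ => ?_⟩
  · refine ext_of_forall_integral_eq_of_IsFiniteMeasure fun f => ?_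
    have hlim := (ProbabilityMeasure.tendsto_iff_forall_integral_tendsto.1 (hmap hT) f).sub
      (ProbabilityMeasure.tendsto_iff_forall_integral_tendsto.1 hν f)
    simp only [ProbabilityMeasure.toMeasure_map,
      integral_map hT.aemeasurable f.continuous.aestronglyMeasurable] at hlim ⊢
    refine sub_eq_zero.1 (tendsto_nhds_unique hlim (Tendsto.mono_left ?_ Nat.hyperfilter_le_atTop))
    refine squeeze_zero_norm (norm_integral_comp_sub_integral_orbitAverage_le hT μ f) ?_
    simpa using (tendsto_one_div_add_atTop_nhds_zero_nat (𝕜 := ℝ)).mul_const (2 * ‖f‖)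
  · have hfixed : (fun n => (average n).map hS.aemeasurable) = average := funext fun n =>
      Subtype.ext (map_orbitAverage_of_commute hS.measurable hT.measurable hST hμ n)
    have hlim : ν.map hS.aemeasurable = ν := tendsto_nhds_unique (hfixed ▸ hmap hS) hν
    exact congrArg Subtype.val hlim

theorem exists_isProbabilityMeasure_smulInvariantMeasure [Nonempty X] (M : Type*) [CommMonoid M]
    [MulAction M X] [ContinuousConstSMul M X] :
    ∃ ν : Measure X, IsProbabilityMeasure ν ∧ SMulInvariantMeasure M X ν := by
  classical
  let fixedMeasures (g : M) : Set (ProbabilityMeasure X) :=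
    {ν | ν.map (continuous_const_smul g).aemeasurable = ν}
  have hclosed (g : M) : IsClosed (fixedMeasures g) :=
    isClosed_eq (ProbabilityMeasure.continuous_map (continuous_const_smul g)) continuous_id
  have hfinite (s : Finset M) : (⋂ g ∈ s, fixedMeasures g).Nonempty := by
    induction s using Finset.induction_on with
    | empty =>
      exact ⟨diracProba (Classical.arbitrary X),
        mem_iInter₂.2 fun g hg => absurd hg (Finset.notMem_empty g)⟩
    | insert g s _ ih =>
      obtain ⟨μ, hμ⟩ := ih
      obtain ⟨ν, hνg, hν⟩ :=
        exists_probabilityMeasure_map_eq_of_commute (continuous_const_smul g) μ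
      refine ⟨ν, ?_⟩
      simp only [mem_iInter, Finset.mem_insert, forall_eq_or_imp] at hμ ⊢
      exact ⟨Subtype.ext hνg, fun k hk => Subtype.ext <|
        hν _ (continuous_const_smul k) (smul_comm k g) (congrArg Subtype.val (hμ k hk))⟩
  obtain ⟨ν, hν⟩ := CompactSpace.iInter_nonempty hclosed hfinite
  exact ⟨ν, inferInstance, smulInvariantMeasure_iff_forall_map_eq.2 fun g =>
    congrArg Subtype.val (mem_iInter.1 hν g)⟩

end InvariantMeasures

section UniqueErgodicity

/-- `μ` is invariant under the action of `H`, and it is the only invariant Borel probability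
measure. -/
structure IsUniquelyErgodic (H : Type*) {X : Type*} [MeasurableSpace X] [SMul H X]
    (μ : Measure X) : Prop where
  smulInvariantMeasure : SMulInvariantMeasure H X μ
  eq_of_smulInvariantMeasure (ν : Measure X) [IsProbabilityMeasure ν]
    [SMulInvariantMeasure H X ν] : ν = μ

variable {X : Type*} [TopologicalSpace X] [CompactSpace X] [TopologicalSpace.MetrizableSpace X]
  [MeasurableSpace X] [BorelSpace X]

theorem exists_smulInvariantMeasure_compl_eq_zero (M : Type*) [CommMonoid M] [MulAction M X]
    [ContinuousConstSMul M X] {Z : Set X} (hne : Z.Nonempty) (hclosed : IsClosed Z)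
    (hinv : ∀ g : M, ∀ x ∈ Z, g • x ∈ Z) :
    ∃ ν : Measure X, IsProbabilityMeasure ν ∧ SMulInvariantMeasure M X ν ∧ ν Zᶜ = 0 := by
  let S : SubMulAction M X := ⟨Z, fun g _ hx => hinv g _ hx⟩
  have : TopologicalSpace.MetrizableSpace S := IsEmbedding.subtypeVal.metrizableSpace
  have : Nonempty S := hne.to_subtype
  have : CompactSpace S := isCompact_iff_compactSpace.1 hclosed.isCompact
  have : ContinuousConstSMul M S :=
    ⟨fun g => (continuous_subtype_val.const_smul g).subtype_mk fun x => (g • x).2⟩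
  obtain ⟨ν, _, _⟩ := exists_isProbabilityMeasure_smulInvariantMeasure (X := S) M
  have hval : Measurable (Subtype.val : S → X) := measurable_subtype_coe
  refine ⟨ν.map Subtype.val, Measure.isProbabilityMeasure_map hval.aemeasurable, ⟨?_⟩, ?_⟩
  · intro g s hs
    rw [Measure.map_apply hval hs, Measure.map_apply hval (measurable_const_smul g hs)]
    exact SMulInvariantMeasure.measure_preimage_smul g (hval hs)
  · rw [Measure.map_apply hval hclosed.measurableSet.compl]
    have : (Subtype.val : S → X) ⁻¹' Zᶜ = ∅ := eq_empty_of_forall_notMem fun x hx => hx x.2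
    rw [this, measure_empty]

theorem IsUniquelyErgodic.isOpenPosMeasure_iff_isMinimal {H : Type*} [CommGroup H] [MulAction H X]
    [ContinuousConstSMul H X] {μ : Measure X} [IsProbabilityMeasure μ]
    (hμ : IsUniquelyErgodic H μ) : μ.IsOpenPosMeasure ↔ MulAction.IsMinimal H X := by
  have := hμ.smulInvariantMeasure
  constructor
  · refine fun _ => (isMinimal_iff_isClosed_smul_invariant H).2 fun Z hclosed hinv => ?_
    refine Z.eq_empty_or_nonempty.imp id fun hne => ?_
    obtain ⟨ν, _, _, hνZ⟩ := exists_smulInvariantMeasure_compl_eq_zero H hne hclosed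
      fun g x hx => hinv g (smul_mem_smul_set hx)
    rw [hμ.eq_of_smulInvariantMeasure ν, hclosed.isOpen_compl.measure_eq_zero_iff μ] at hνZ
    exact compl_empty_iff.1 hνZ
  · exact fun _ => ⟨fun U hU hne => (measure_isOpen_pos_of_smulInvariant_of_compact_ne_zero H
      isCompact_univ (NeZero.ne _) hU hne).ne'⟩

end UniqueErgodicity

section MinimalSets

variable {H : Type*} [Group H] [MulAction H T1]

theorem isMinimalSet_univ_iff [ContinuousConstSMul H T1] :
    IsMinimalSet H (univ : Set T1) ↔ MulAction.IsMinimal H T1 := by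
  rw [isMinimal_iff_isClosed_smul_invariant]
  constructor
  · rintro ⟨-, -, -, hmin⟩ Z hclosed hinv
    exact Z.eq_empty_or_nonempty.imp id fun hne =>
      hmin Z hne hclosed (fun g x hx => hinv g (smul_mem_smul_set hx)) (subset_univ Z)
  · refine fun hmin => ⟨univ_nonempty, isClosed_univ, fun _ _ _ => mem_univ _, ?_⟩
    intro Z hne hclosed hinv _
    exact (hmin Z hclosed fun g => smul_set_subset_iff.2 (hinv g)).resolve_left hne.ne_empty

end MinimalSets

section Integration

open scoped ComplexOrder

variable {X : Type*} [TopologicalSpace X]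

theorem linearMap_ext_ofReal {M : Type*} [AddCommMonoid M] [Module ℂ M] {φ ψ : C(X, ℂ) →ₗ[ℂ] M}
    (h : ∀ f : C(X, ℝ), φ (Complex.ofRealCLM.compLeftContinuous ℝ X f) =
      ψ (Complex.ofRealCLM.compLeftContinuous ℝ X f)) : φ = ψ := by
  ext f
  have hf : f = Complex.ofRealCLM.compLeftContinuous ℝ X (Complex.reCLM.compLeftContinuous ℝ X f) +
      Complex.I •
        Complex.ofRealCLM.compLeftContinuous ℝ X (Complex.imCLM.compLeftContinuous ℝ X f) := by
    ext x
    exact (Complex.re_add_im (f x)).symm.trans (congrArg _ (mul_comm _ _))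
  rw [hf, map_add, map_add, map_smul, map_smul, h, h]

variable [CompactSpace X] [MeasurableSpace X] [BorelSpace X]

theorem integrable_continuousMap (f : C(X, ℂ)) (μ : Measure X) [IsFiniteMeasure μ] :
    Integrable f μ :=
  f.continuous.integrable_of_hasCompactSupport (.of_compactSpace f)

/-- Integration against `μ`, as a positive linear functional on `C(X, ℂ)`. -/
def integralFunctional (μ : Measure X) [IsFiniteMeasure μ] : C(X, ℂ) →ₚ[ℂ] ℂ :=
  PositiveLinearMap.mk₀
    { toFun f := ∫ x, f x ∂μ
      map_add' f g := integral_add (integrable_continuousMap f μ) (integrable_continuousMap g μ)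
      map_smul' c f := integral_smul c f }
    fun _ hf => integral_nonneg hf

theorem integralFunctional_apply (μ : Measure X) [IsFiniteMeasure μ] (f : C(X, ℂ)) :
    integralFunctional μ f = ∫ x, f x ∂μ := rfl

theorem integralFunctional_comp_eq_iff_map_eq [HasOuterApproxClosed X] {μ : Measure X}
    [IsFiniteMeasure μ] (T : C(X, X)) :
    (∀ f, integralFunctional μ (f.comp T) = integralFunctional μ f) ↔ μ.map T = μ := by
  have hT : AEMeasurable T μ := T.continuous.aemeasurable
  have hmap (f : C(X, ℂ)) : integralFunctional μ (f.comp T) = ∫ x, f x ∂μ.map T :=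
    (integral_map hT f.continuous.aestronglyMeasurable).symm
  refine ⟨fun h => ext_of_forall_integral_eq_of_IsFiniteMeasure fun f => ?_, fun h f => ?_⟩
  · have := h (Complex.ofRealCLM.compLeftContinuous ℝ X f.toContinuousMap)
    rw [hmap, integralFunctional_apply] at this
    exact Complex.ofReal_injective <|
      (integral_complex_ofReal.symm.trans this).trans integral_complex_ofReal
  · rw [hmap, h, integralFunctional_apply]

theorem smulInvariantMeasure_iff_integralFunctional_comp [HasOuterApproxClosed X] {H : Type*}
    [SMul H X] [ContinuousConstSMul H X] {μ : Measure X} [IsFiniteMeasure μ] :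
    SMulInvariantMeasure H X μ ↔ ∀ (g : H) (f : C(X, ℂ)),
      integralFunctional μ (f.comp ⟨(g • ·), continuous_const_smul g⟩) =
        integralFunctional μ f := by
  simp only [integralFunctional_comp_eq_iff_map_eq, ContinuousMap.coe_mk,
    smulInvariantMeasure_iff_forall_map_eq]

theorem isOpenPosMeasure_iff_integralFunctional [T2Space X] {μ : Measure X} [IsFiniteMeasure μ] :
    μ.IsOpenPosMeasure ↔ ∀ f : C(X, ℂ), 0 ≤ f → integralFunctional μ f = 0 → f = 0 := by
  refine ⟨fun _ f hf hint => ?_, fun h => ⟨fun U hU hne hzero => ?_⟩⟩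
  · have hofReal (x : X) : ((f x).re : ℂ) = f x := Complex.ext rfl (Complex.nonneg_iff.1 (hf x)).2
    have hre_cont : Continuous fun x => (f x).re := Complex.continuous_re.comp f.continuous
    have hre : ∫ x, (f x).re ∂μ = 0 := by
      rw [← Complex.ofReal_eq_zero, ← integral_complex_ofReal]
      simpa only [hofReal, integralFunctional_apply] using hint
    have hre_ae : (fun x => (f x).re) =ᵐ[μ] 0 :=
      (integral_eq_zero_iff_of_nonneg (fun x => (Complex.nonneg_iff.1 (hf x)).1)
        (integrable_continuousMap f μ).re).1 hre
    have hre_zero : (fun x => (f x).re) = 0 := (hre_cont.ae_eq_iff_eq μ continuous_zero).1 hre_ae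
    ext x
    exact (hofReal x).symm.trans (congrArg Complex.ofReal (congrFun hre_zero x))
  · obtain ⟨x, hx⟩ := hne
    obtain ⟨f, hf_compl, hfx, hf01⟩ := exists_continuous_zero_one_of_isClosed
      hU.isClosed_compl isClosed_singleton (disjoint_singleton_right.2 (notMem_compl_iff.2 hx))
    have hzero : Complex.ofRealCLM.compLeftContinuous ℝ X f = 0 := by
      refine h _ (fun y => Complex.zero_le_real.2 (hf01 y).1) (integral_eq_zero_of_ae ?_)
      refine (measure_eq_zero_iff_ae_notMem.1 hzero).mono fun y hy => ?_
      exact congrArg Complex.ofReal (hf_compl hy)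
    have hfx_zero : f x = 0 := Complex.ofReal_injective (DFunLike.congr_fun hzero x)
    exact one_ne_zero ((hfx rfl).symm.trans hfx_zero)

variable [T2Space X]

theorem exists_integralFunctional_eq (φ : C(X, ℂ) →ₚ[ℂ] ℂ) :
    ∃ (ν : Measure X) (_ : IsFiniteMeasure ν), integralFunctional ν = φ := by
  let ι : C(X, ℝ) →L[ℝ] C(X, ℂ) := Complex.ofRealCLM.compLeftContinuous ℝ X
  let Λ₀ : C(X, ℝ) →ₗ[ℝ] ℝ := Complex.reLm ∘ₗ φ.toLinearMap.restrictScalars ℝ ∘ₗ ι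
  let Λ : CompactlySupportedContinuousMap X ℝ →ₚ[ℝ] ℝ := PositiveLinearMap.mk₀
    { toFun f := Λ₀ f.toContinuousMap
      map_add' f g := Λ₀.map_add f.toContinuousMap g.toContinuousMap
      map_smul' c f := Λ₀.map_smul c f.toContinuousMap }
    fun f hf => (Complex.nonneg_iff.1 <|
      φ.map_nonneg (x := ι f.toContinuousMap) fun x => Complex.zero_le_real.2 (hf x)).1
  have hreal (f : C(X, ℝ)) : φ (ι f) = ((φ (ι f)).re : ℂ) := by
    have hself : IsSelfAdjoint (ι f) := ContinuousMap.ext fun x => Complex.conj_ofReal (f x)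
    exact (Complex.conj_eq_iff_re.1 (hself.map φ)).symm
  refine ⟨RealRMK.rieszMeasure Λ, inferInstance, ?_⟩
  rw [← PositiveLinearMap.toLinearMap_inj]
  refine linearMap_ext_ofReal fun f => ?_
  have := RealRMK.integral_rieszMeasure Λ (CompactlySupportedContinuousMap.continuousMapEquiv f)
  exact integral_complex_ofReal.trans ((congrArg Complex.ofReal this).trans (hreal f).symm)

theorem IsUniquelyErgodic.eq_integralFunctional [HasOuterApproxClosed X] {H : Type*} [SMul H X]
    [ContinuousConstSMul H X] {μ : Measure X} [IsFiniteMeasure μ]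
    (hμ : IsUniquelyErgodic H μ) {φ : C(X, ℂ) →ₚ[ℂ] ℂ} (hone : φ 1 = 1)
    (hinv : ∀ (g : H) (f : C(X, ℂ)), φ (f.comp ⟨(g • ·), continuous_const_smul g⟩) = φ f) :
    φ = integralFunctional μ := by
  obtain ⟨ν, _, rfl⟩ := exists_integralFunctional_eq φ
  have : SMulInvariantMeasure H X ν := smulInvariantMeasure_iff_integralFunctional_comp.2 hinv
  have : IsProbabilityMeasure ν := by
    simpa [integralFunctional_apply, isProbabilityMeasure_iff_real] using hone
  obtain rfl := hμ.eq_of_smulInvariantMeasure ν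
  rfl

end Integration

namespace CrossedProductData

open scoped ComplexOrder

variable {H : Type*} [Group H] [MulAction H T1] {A : Type*} [NormedRing A] [StarRing A]
  [CStarRing A] [NormedAlgebra ℂ A] [StarModule ℂ A] [CompleteSpace A]
  (D : CrossedProductData H A)

include D in
theorem continuousConstSMul : ContinuousConstSMul H T1 := ⟨D.cont_smul⟩

/-- The action `f ↦ f ∘ g⁻¹` of `g` on `C(𝕋)`. -/
def act (g : H) : C(T1, ℂ) →⋆ₐ[ℂ] C(T1, ℂ) :=
  ContinuousMap.compStarAlgHom' ℂ ℂ ⟨fun x => g⁻¹ • x, D.cont_smul g⁻¹⟩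

theorem act_apply (g : H) (f : C(T1, ℂ)) (x : T1) : D.act g f x = f (g⁻¹ • x) := rfl

theorem act_inv_act (g : H) (f : C(T1, ℂ)) : D.act g⁻¹ (D.act g f) = f := by
  ext x
  rw [act_apply, act_apply, inv_inv, inv_smul_smul]

theorem lam_inv_mul_lam (g : H) : D.lam g⁻¹ * D.lam g = 1 := by
  rw [← D.lam_mul, inv_mul_cancel, D.lam_one]

theorem star_lam (g : H) : star (D.lam g) = D.lam g⁻¹ := by
  refine left_inv_eq_right_inv (Unitary.star_mul_self_of_mem (D.lam_unitary g)) ?_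
  rw [← D.lam_mul, mul_inv_cancel, D.lam_one]

theorem lam_mul_iota (g : H) (f : C(T1, ℂ)) :
    D.lam g * D.iota f = D.iota (D.act g f) * D.lam g := by
  have hcov : D.lam g * D.iota f * D.lam g⁻¹ = D.iota (D.act g f) :=
    D.star_lam g ▸ D.covariance g f
  rw [← hcov, mul_assoc _ (D.lam g⁻¹), D.lam_inv_mul_lam, mul_one]

theorem iota_mul_lam_mul_iota_mul_lam (f f' : C(T1, ℂ)) (g h : H) :
    D.iota f * D.lam g * (D.iota f' * D.lam h) = D.iota (f * D.act g f') * D.lam (g * h) := by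
  rw [mul_assoc, ← mul_assoc (D.lam g), D.lam_mul_iota, mul_assoc _ (D.lam g), ← D.lam_mul,
    ← mul_assoc, ← map_mul]

theorem star_iota_mul_lam (f : C(T1, ℂ)) (g : H) :
    star (D.iota f * D.lam g) = D.iota (D.act g⁻¹ (star f)) * D.lam g⁻¹ := by
  rw [star_mul, D.star_lam, ← map_star, D.lam_mul_iota]

theorem E_iota_mul_lam [DecidableEq H] (f : C(T1, ℂ)) (g : H) :
    D.E (D.iota f * D.lam g) = if g = 1 then f else 0 := by
  split_ifs with hg
  · rw [hg, D.lam_one, mul_one, D.E_diag]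
  · exact D.E_off f g hg

theorem dense_span_iota_mul_lam :
    Dense (Submodule.span ℂ {a : A | ∃ (f : C(T1, ℂ)) (g : H), a = D.iota f * D.lam g} : Set A) :=
  dense_iff_closure_eq.2 D.generates

theorem linearMap_ext {M : Type*} [AddCommMonoid M] [Module ℂ M] [TopologicalSpace M] [T2Space M]
    {φ ψ : A →ₗ[ℂ] M} (hφ : Continuous φ) (hψ : Continuous ψ)
    (h : ∀ f g, φ (D.iota f * D.lam g) = ψ (D.iota f * D.lam g)) : φ = ψ := by
  refine DFunLike.coe_injective (hφ.ext_on D.dense_span_iota_mul_lam hψ (LinearMap.eqOn_span ?_))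
  rintro _ ⟨f, g, rfl⟩
  exact h f g

theorem map_mul_comm_of_iota_mul_lam {τ : A →ₗ[ℂ] ℂ} (hτ : Continuous τ)
    (h : ∀ f g f' g', τ (D.iota f * D.lam g * (D.iota f' * D.lam g')) =
      τ (D.iota f' * D.lam g' * (D.iota f * D.lam g))) (a b : A) : τ (a * b) = τ (b * a) := by
  have hgen (f : C(T1, ℂ)) (g : H) (b : A) :
      τ (D.iota f * D.lam g * b) = τ (b * (D.iota f * D.lam g)) :=
    LinearMap.congr_fun (f := τ ∘ₗ LinearMap.mulLeft ℂ (D.iota f * D.lam g))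
      (g := τ ∘ₗ LinearMap.mulRight ℂ (D.iota f * D.lam g))
      (D.linearMap_ext (hτ.comp (continuous_const_mul _)) (hτ.comp (continuous_mul_const _))
        (h f g)) b
  exact LinearMap.congr_fun (f := τ ∘ₗ LinearMap.mulRight ℂ b) (g := τ ∘ₗ LinearMap.mulLeft ℂ b)
    (D.linearMap_ext (hτ.comp (continuous_mul_const _)) (hτ.comp (continuous_const_mul _))
      fun f g => hgen f g b) a

theorem exists_sum_iota_mul_lam_eq {a : A}
    (ha : a ∈ Submodule.span ℂ {a : A | ∃ (f : C(T1, ℂ)) (g : H), a = D.iota f * D.lam g}) :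
    ∃ F : H →₀ C(T1, ℂ), ∑ g ∈ F.support, D.iota (F g) * D.lam g = a := by
  let Φ : (H →₀ C(T1, ℂ)) →ₗ[ℂ] A :=
    Finsupp.lsum ℂ fun g => LinearMap.mulRight ℂ (D.lam g) ∘ₗ (D.iota : C(T1, ℂ) →ₗ[ℂ] A)
  refine Submodule.span_le (p := LinearMap.range Φ).2 ?_ ha
  rintro _ ⟨f, g, rfl⟩
  exact ⟨Finsupp.single g f, by simp [Φ]⟩

theorem E_star_mul_self_sum_iota_mul_lam (s : Finset H) (F : H → C(T1, ℂ)) :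
    D.E (star (∑ g ∈ s, D.iota (F g) * D.lam g) * ∑ g ∈ s, D.iota (F g) * D.lam g) =
      ∑ g ∈ s, D.act g⁻¹ (star (F g) * F g) := by
  classical
  simp only [star_sum, Finset.sum_mul_sum, map_sum, star_iota_mul_lam,
    iota_mul_lam_mul_iota_mul_lam, E_iota_mul_lam, inv_mul_eq_one, Finset.sum_ite_eq]
  refine Finset.sum_congr rfl fun g hg => ?_
  rw [if_pos hg, map_mul]

theorem E_star_mul_self_nonneg (a : A) : 0 ≤ D.E (star a * a) := by
  have hcont : Continuous fun a : A => D.E (star a * a) :=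
    D.E_cont.comp (continuous_star.mul continuous_id)
  refine D.dense_span_iota_mul_lam.induction (P := fun a => 0 ≤ D.E (star a * a)) ?_
    (isClosed_Ici.preimage hcont) a
  intro b hb
  obtain ⟨F, rfl⟩ := D.exists_sum_iota_mul_lam_eq hb
  rw [E_star_mul_self_sum_iota_mul_lam]
  exact Finset.sum_nonneg fun g _ => map_nonneg (D.act g⁻¹) (star_mul_self_nonneg (F g))

theorem exists_commutator_eq_iota_mul_lam {g : H} (hg : ∀ x : T1, g • x ≠ x) (f : C(T1, ℂ)) :
    ∃ a b : A, D.iota f * D.lam g = a * b - b * a := by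
  let z : C(T1, ℂ) := ⟨fun x => AddCircle.toCircle x, by fun_prop⟩
  have hunit : IsUnit (z - D.act g z) := by
    refine (ContinuousMap.isUnit_iff_forall_ne_zero _).2 fun x hx => ?_
    have hfix : x = g⁻¹ • x :=
      AddCircle.injective_toCircle one_ne_zero (Circle.ext (sub_eq_zero.1 hx))
    exact hg x (eq_inv_smul_iff.1 hfix)
  obtain ⟨k, rfl⟩ : z - D.act g z ∣ f := hunit.dvd
  refine ⟨D.iota z, D.iota k * D.lam g, ?_⟩
  rw [mul_assoc (D.iota k), D.lam_mul_iota, ← mul_assoc, ← mul_assoc, ← map_mul, ← map_mul,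
    ← sub_mul, ← map_sub, sub_mul, mul_comm k]

section CanonicalTrace

variable (μ : Measure T1) [IsFiniteMeasure μ]

/-- The functional `a ↦ ∫ E(a) dμ` on the crossed product. It is a tracial state when `μ` is an
invariant probability measure. -/
def canonicalTrace : A →ₗ[ℂ] ℂ := (integralFunctional μ).toLinearMap ∘ₗ D.E

theorem canonicalTrace_apply (a : A) : D.canonicalTrace μ a = integralFunctional μ (D.E a) := rfl

theorem continuous_canonicalTrace : Continuous (D.canonicalTrace μ) :=
  (map_continuous (integralFunctional μ)).comp D.E_cont

theorem canonicalTrace_faithful_iff :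
    (∀ a : A, D.canonicalTrace μ (star a * a) = 0 → a = 0) ↔ μ.IsOpenPosMeasure := by
  rw [isOpenPosMeasure_iff_integralFunctional]
  refine ⟨fun h f hf hint => ?_, fun h a ha => D.E_faithful a (h _ (D.E_star_mul_self_nonneg a) ha)⟩
  obtain ⟨b, rfl⟩ := CStarAlgebra.nonneg_iff_eq_star_mul_self.1 hf
  have hb : D.iota b = 0 := h _ <| by
    rw [← map_star, ← map_mul, canonicalTrace_apply, D.E_diag, hint]
  rw [D.iota_injective (hb.trans (map_zero D.iota).symm), mul_zero]

end CanonicalTrace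

theorem isTracialState_canonicalTrace (μ : Measure T1) [IsProbabilityMeasure μ]
    [SMulInvariantMeasure H T1 μ] : IsTracialState (D.canonicalTrace μ) := by
  classical
  have := D.continuousConstSMul
  have hinv (g : H) (f : C(T1, ℂ)) : integralFunctional μ (D.act g f) = integralFunctional μ f :=
    smulInvariantMeasure_iff_integralFunctional_comp.1 ‹_› g⁻¹ f
  refine ⟨D.continuous_canonicalTrace μ, ?_,
    D.map_mul_comm_of_iota_mul_lam (D.continuous_canonicalTrace μ) fun f g f' g' => ?_,
    fun a => ?_⟩
  · rw [canonicalTrace_apply, ← map_one D.iota, D.E_diag, integralFunctional_apply]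
    simp
  · simp only [canonicalTrace_apply, iota_mul_lam_mul_iota_mul_lam, E_iota_mul_lam]
    by_cases hgg' : g' = g⁻¹
    · rw [hgg', mul_inv_cancel, inv_mul_cancel, if_pos rfl, if_pos rfl, ← hinv g⁻¹, map_mul,
        D.act_inv_act, mul_comm]
    · rw [if_neg (mt eq_inv_of_mul_eq_one_right hgg'), if_neg (mt eq_inv_of_mul_eq_one_left hgg')]
  · obtain ⟨r, hr, hτr⟩ := RCLike.nonneg_iff_exists_ofReal.1
      ((integralFunctional μ).map_nonneg (D.E_star_mul_self_nonneg a))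
    exact ⟨r, hr, hτr.symm⟩

section TracialState

variable {τ : A →ₗ[ℂ] ℂ} (hτ : IsTracialState τ)

include hτ

theorem tracialState_iota_mul_lam_eq_zero (hfree : FreeAction H) {g : H} (hg : g ≠ 1)
    (f : C(T1, ℂ)) : τ (D.iota f * D.lam g) = 0 := by
  obtain ⟨a, b, hab⟩ := D.exists_commutator_eq_iota_mul_lam (fun x hx => hg (hfree g x hx)) f
  rw [hab, map_sub, hτ.2.2.1, sub_self]

theorem tracialState_iota_act (g : H) (f : C(T1, ℂ)) :
    τ (D.iota (D.act g f)) = τ (D.iota f) := by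
  calc τ (D.iota (D.act g f)) = τ (D.lam g * D.iota f * D.lam g⁻¹) :=
        congrArg τ (D.star_lam g ▸ D.covariance g f).symm
    _ = τ (D.iota f) := by rw [hτ.2.2.1, ← mul_assoc, D.lam_inv_mul_lam, one_mul]

theorem tracialState_iota_nonneg {f : C(T1, ℂ)} (hf : 0 ≤ f) : 0 ≤ τ (D.iota f) := by
  obtain ⟨b, rfl⟩ := CStarAlgebra.nonneg_iff_eq_star_mul_self.1 hf
  obtain ⟨r, hr, hτr⟩ := hτ.2.2.2 (D.iota b)
  rw [map_mul, map_star, hτr]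
  exact Complex.zero_le_real.2 hr

theorem tracialState_iota_eq_integral {μ : Measure T1} [IsFiniteMeasure μ]
    (hμ : IsUniquelyErgodic H μ) (f : C(T1, ℂ)) : τ (D.iota f) = ∫ x, f x ∂μ := by
  have := D.continuousConstSMul
  let φ : C(T1, ℂ) →ₚ[ℂ] ℂ :=
    PositiveLinearMap.mk₀ (τ ∘ₗ (D.iota : C(T1, ℂ) →ₗ[ℂ] A)) fun _ => D.tracialState_iota_nonneg hτ
  have hone : φ 1 = 1 := (congrArg τ (map_one D.iota)).trans hτ.2.1
  have hinv (g : H) (f : C(T1, ℂ)) :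
      φ (f.comp ⟨(g • ·), continuous_const_smul g⟩) = φ f := by
    have hact : D.act g⁻¹ f = f.comp ⟨(g • ·), continuous_const_smul g⟩ := by
      ext x
      rw [act_apply, inv_inv]
      rfl
    exact hact ▸ D.tracialState_iota_act hτ g⁻¹ f
  exact DFunLike.congr_fun (hμ.eq_integralFunctional hone hinv) f

theorem tracialState_eq_canonicalTrace (hfree : FreeAction H) {μ : Measure T1}
    [IsFiniteMeasure μ] (hμ : IsUniquelyErgodic H μ) : τ = D.canonicalTrace μ := by
  have := hμ.smulInvariantMeasure
  classical
  refine D.linearMap_ext hτ.1 (D.continuous_canonicalTrace μ) fun f g => ?_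
  rw [canonicalTrace_apply, E_iota_mul_lam]
  split_ifs with hg
  · rw [hg, D.lam_one, mul_one, D.tracialState_iota_eq_integral hτ hμ, integralFunctional_apply]
  · rw [D.tracialState_iota_mul_lam_eq_zero hτ hfree hg, map_zero]

end TracialState

end CrossedProductData

theorem statement18_general (G : Type*) [CommGroup G] [MulAction G T1]
    {A : Type*} [NormedRing A] [StarRing A] [CStarRing A] [NormedAlgebra ℂ A]
    [StarModule ℂ A] [CompleteSpace A]
    (D : CrossedProductData G A)
    (hfree : FreeAction G)
    (μ : Measure T1) [IsProbabilityMeasure μ]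
    (hμinv : ∀ g : G, Measure.map (fun x : T1 => g • x) μ = μ)
    (hμuniq : ∀ ν : Measure T1, IsProbabilityMeasure ν → ν.Regular →
      (∀ g : G, Measure.map (fun x : T1 => g • x) ν = ν) → ν = μ) :
    (∃! τ : A →ₗ[ℂ] ℂ, IsTracialState τ) ∧
    ∀ τ : A →ₗ[ℂ] ℂ, IsTracialState τ →
      (∀ f : C(T1, ℂ), τ (D.iota f) = ∫ x : T1, f x ∂μ) ∧
      (∀ (f : C(T1, ℂ)) (g : G), g ≠ 1 → τ (D.iota f * D.lam g) = 0) ∧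
      ((∀ a : A, τ (star a * a) = 0 → a = 0) ↔
        IsMinimalSet G (Set.univ : Set T1)) := by
  have := D.continuousConstSMul
  have hμ : IsUniquelyErgodic G μ :=
    ⟨smulInvariantMeasure_iff_forall_map_eq.2 hμinv, fun ν _ _ =>
      hμuniq ν ‹_› inferInstance (smulInvariantMeasure_iff_forall_map_eq.1 ‹_›)⟩
  have := hμ.smulInvariantMeasure
  refine ⟨⟨D.canonicalTrace μ, D.isTracialState_canonicalTrace μ,
    fun τ hτ => D.tracialState_eq_canonicalTrace hτ hfree hμ⟩, fun τ hτ =>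
    ⟨D.tracialState_iota_eq_integral hτ hμ,
      fun f g hg => D.tracialState_iota_mul_lam_eq_zero hτ hfree hg f, ?_⟩⟩
  rw [D.tracialState_eq_canonicalTrace hτ hfree hμ, D.canonicalTrace_faithful_iff,
    hμ.isOpenPosMeasure_iff_isMinimal, isMinimalSet_univ_iff]

/-- for a free action of a countably infinite discrete abelian group
on the circle with unique invariant probability measure `μ`, the crossed product
`C(𝕋) ⋊ G` has a unique tracial state `τ`, given by `τ(f λ_g) = ∫ f dμ` for `g = e`
and `τ(f λ_g) = 0` otherwise; moreover `τ` is faithful iff the action is minimal. -/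
theorem statement18 (G : Type*) [CommGroup G] [Countable G] [Infinite G]
    [MulAction G T1]
    {A : Type*} [NormedRing A] [StarRing A] [CStarRing A] [NormedAlgebra ℂ A]
    [StarModule ℂ A] [CompleteSpace A]
    (D : CrossedProductData G A)
    (hfree : FreeAction G)
    (μ : Measure T1) [IsProbabilityMeasure μ] (hμreg : μ.Regular)
    (hμinv : ∀ g : G, Measure.map (fun x : T1 => g • x) μ = μ)
    (hμuniq : ∀ ν : Measure T1, IsProbabilityMeasure ν → ν.Regular →
      (∀ g : G, Measure.map (fun x : T1 => g • x) ν = ν) → ν = μ) :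
    (∃! τ : A →ₗ[ℂ] ℂ, IsTracialState τ) ∧
    ∀ τ : A →ₗ[ℂ] ℂ, IsTracialState τ →
      (∀ f : C(T1, ℂ), τ (D.iota f) = ∫ x : T1, f x ∂μ) ∧
      (∀ (f : C(T1, ℂ)) (g : G), g ≠ 1 → τ (D.iota f * D.lam g) = 0) ∧
      ((∀ a : A, τ (star a * a) = 0 → a = 0) ↔
        IsMinimalSet G (Set.univ : Set T1)) := by
  exact statement18_general G D hfree μ hμinv hμuniq
end
end
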